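/- Assume the characteristic of F is not 2 and that σ₃ = σ₄. Let G : D × D → D × D be an F-algebra automorphism of Cay(D,c,σ₁,σ₂,σ₃,σ₄) (bijective, F-linear, multiplicative) such that G(x,0) = (g(x),0) for all x ∈ D, where g is an F-algebra automorphism of D. Then there exists b ∈ F with b ≠ 0 such that g(c) = c·b², and, setting h = σ₃ ∘ g ∘ σ₃⁻¹, one has σ₁ ∘ h = g ∘ σ₁, σ₂ ∘ h = g ∘ σ₂, and G(u,v) = (g(u), h(v)·b) for all u, v ∈ D. -/

import Mathlib

/-- Multiplication of the generalized Cayley–Dickson double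
`Cay(D, c, σ₁, σ₂, σ₃, σ₄)`:
`(u,v)·(x,y) = (u·x + c·σ₁(v)·σ₂(y), σ₃(u)·y + v·σ₄(x))`. -/
def cayMul {R : Type*} [Ring R] (c : R) (σ₁ σ₂ σ₃ σ₄ : R → R) :
    R × R → R × R → R × R :=
  fun p q => (p.1 * q.1 + c * σ₁ p.2 * σ₂ q.2, σ₃ p.1 * q.2 + p.2 * σ₄ q.1)

/-!
Write `G (0, 1) = (a, b)`. Since `(0, v) = (σ₃⁻¹ v, 0) · (0, 1) = (0, 1) · (σ₃⁻¹ v, 0)`, the map `G`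
is determined by `g`, `a` and `b`, and comparing the two factorizations shows that `a` and `b` are
central, hence scalars. Surjectivity of `G` makes `b` invertible. Applying `G` to
`(0, 1) · (0, 1) = (c, 0)` gives `2 σ₃(a) b = 0` in the second coordinate, so `a = 0`. The first
coordinate of `G` applied to `(0, v) · (0, w) = (c σ₁(v) σ₂(w), 0)` then yields the formula for
`g c` (take `v = w = 1`) and the two commutation relations (take `w = 1`, respectively `v = 1`).
-/

section CayMul

variable {A : Type*} [Ring A] {c : A} {σ₁ σ₂ σ₃ σ₄ : A → A}

lemma cayMul_inl_left (hσ₁ : σ₁ 0 = 0) (x : A) (p : A × A) :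
    cayMul c σ₁ σ₂ σ₃ σ₄ (x, 0) p = (x * p.1, σ₃ x * p.2) := by
  simp [cayMul, hσ₁]

lemma cayMul_inl_right (hσ₂ : σ₂ 0 = 0) (p : A × A) (x : A) :
    cayMul c σ₁ σ₂ σ₃ σ₄ p (x, 0) = (p.1 * x, p.2 * σ₄ x) := by
  simp [cayMul, hσ₂]

lemma cayMul_inr_inr (hσ₃ : σ₃ 0 = 0) (hσ₄ : σ₄ 0 = 0) (v w : A) :
    cayMul c σ₁ σ₂ σ₃ σ₄ (0, v) (0, w) = (c * σ₁ v * σ₂ w, 0) := by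
  simp [cayMul, hσ₃, hσ₄]

end CayMul

/-- `G` is an additive and multiplicative self-map of the generalized Cayley–Dickson double
`Cay(A, c, σ₁, σ₂, σ₃, σ₄)` that restricts to `g` on the first summand `A × 0`. The twists and `g`
are bare functions, so that the notion applies to bundled maps of any kind through their
coercions. -/
structure IsCayEndExtending {A : Type*} [Ring A] (c : A) (σ₁ σ₂ σ₃ σ₄ g : A → A)
    (G : A × A → A × A) : Prop where
  map_add : ∀ p q, G (p + q) = G p + G q
  map_cayMul : ∀ p q, G (cayMul c σ₁ σ₂ σ₃ σ₄ p q) = cayMul c σ₁ σ₂ σ₃ σ₄ (G p) (G q)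
  map_inl : ∀ x, G (x, 0) = (g x, 0)

namespace IsCayEndExtending

section Factorization

variable {A : Type*} [Ring A] {c : A} {σ₁ σ₂ σ₃ σ₄ g : A → A} {G : A × A → A × A}

lemma map_mk (h : IsCayEndExtending c σ₁ σ₂ σ₃ σ₄ g G) (u v : A) :
    G (u, v) = (g u, 0) + G (0, v) := by
  rw [← h.map_inl, ← h.map_add, Prod.mk_add_mk, add_zero, zero_add]

lemma map_inr_left (h : IsCayEndExtending c σ₁ σ₂ σ₃ σ₄ g G) (hσ₁ : σ₁ 0 = 0) (u : A) :
    G (0, σ₃ u) = (g u * (G (0, 1)).1, σ₃ (g u) * (G (0, 1)).2) := by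
  have factorization : cayMul c σ₁ σ₂ σ₃ σ₄ (u, 0) (0, 1) = (0, σ₃ u) := by
    simp [cayMul_inl_left hσ₁]
  rw [← factorization, h.map_cayMul, h.map_inl, cayMul_inl_left hσ₁]

lemma map_inr_right (h : IsCayEndExtending c σ₁ σ₂ σ₃ σ₄ g G) (hσ₂ : σ₂ 0 = 0) (u : A) :
    G (0, σ₄ u) = ((G (0, 1)).1 * g u, (G (0, 1)).2 * σ₄ (g u)) := by
  have factorization : cayMul c σ₁ σ₂ σ₃ σ₄ (0, 1) (u, 0) = (0, σ₄ u) := by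
    simp [cayMul_inl_right hσ₂]
  rw [← factorization, h.map_cayMul, h.map_inl, cayMul_inl_right hσ₂]

lemma isUnit_snd (h : IsCayEndExtending c σ₁ σ₂ σ₃ σ₄ g G) (hσ₁ : σ₁ 0 = 0) (hσ₂ : σ₂ 0 = 0)
    (hσ₃ : Function.Surjective σ₃) (hσ₄ : Function.Surjective σ₄) (hG : Function.Surjective G) :
    IsUnit (G (0, 1)).2 := by
  obtain ⟨⟨u, v⟩, huv⟩ := hG (0, 1)
  have snd_eq_one : (G (0, v)).2 = 1 := by
    simpa [h.map_mk u v] using congrArg Prod.snd huv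
  obtain ⟨x, hx⟩ := hσ₃ v
  obtain ⟨y, hy⟩ := hσ₄ v
  refine isUnit_iff_exists_and_exists.2 ⟨⟨σ₄ (g y), ?_⟩, ⟨σ₃ (g x), ?_⟩⟩
  · simpa [← hy, h.map_inr_right hσ₂] using snd_eq_one
  · simpa [← hx, h.map_inr_left hσ₁] using snd_eq_one

lemma fst_mem_center (h : IsCayEndExtending c σ₁ σ₂ σ₃ σ₃ g G) (hσ₁ : σ₁ 0 = 0) (hσ₂ : σ₂ 0 = 0)
    (hg : Function.Surjective g) : (G (0, 1)).1 ∈ Set.center A := by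
  refine Semigroup.mem_center_iff.2 <| hg.forall.2 fun u ↦ ?_
  exact congrArg Prod.fst <| (h.map_inr_left hσ₁ u).symm.trans (h.map_inr_right hσ₂ u)

lemma snd_mem_center (h : IsCayEndExtending c σ₁ σ₂ σ₃ σ₃ g G) (hσ₁ : σ₁ 0 = 0) (hσ₂ : σ₂ 0 = 0)
    (hσ₃ : Function.Surjective σ₃) (hg : Function.Surjective g) : (G (0, 1)).2 ∈ Set.center A := by
  refine Semigroup.mem_center_iff.2 <| (hσ₃.comp hg).forall.2 fun u ↦ ?_
  exact congrArg Prod.snd <| (h.map_inr_left hσ₁ u).symm.trans (h.map_inr_right hσ₂ u)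

lemma two_mul_fst_eq_zero {σ : A ≃+* A} (h : IsCayEndExtending c σ₁ σ₂ σ σ g G)
    (hcenter : (G (0, 1)).2 ∈ Set.center A) (hunit : IsUnit (G (0, 1)).2) :
    2 * (G (0, 1)).1 = 0 := by
  set a := (G (0, 1)).1
  set b := (G (0, 1)).2
  have anticommutator : 0 = σ a * b + b * σ a := by
    have square := h.map_cayMul (0, 1) (0, 1)
    rw [cayMul_inr_inr (map_zero σ) (map_zero σ), h.map_inl] at square
    exact congrArg Prod.snd square
  have twist_eq_zero : σ (2 * a) * b = 0 := by
    rw [anticommutator, (hcenter.comm (σ a)).eq, map_mul, map_ofNat, two_mul, add_mul]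
  rwa [hunit.mul_left_eq_zero, map_eq_zero_iff σ σ.injective] at twist_eq_zero

end Factorization

section Scalar

variable {R A : Type*} [CommSemiring R] [Ring A] [Algebra R A] {c : A} {σ₁ σ₂ : A →ₐ[R] A}
  {σ₃ σ₄ g h : A ≃+* A} {G : A × A → A × A} {b : R}

lemma apply_mul_mul (hG : IsCayEndExtending c σ₁ σ₂ σ₃ σ₄ g G)
    (hinr : ∀ v, G (0, v) = (0, h v * algebraMap R A b)) (v w : A) :
    g (c * σ₁ v * σ₂ w) = c * σ₁ (h v) * σ₂ (h w) * algebraMap R A (b ^ 2) := by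
  have product := congrArg Prod.fst (hG.map_cayMul (0, v) (0, w))
  simp only [hinr, cayMul_inr_inr (map_zero σ₃) (map_zero σ₄), hG.map_inl, map_mul,
    AlgHom.commutes] at product
  rw [map_mul, map_mul, product, pow_two, map_mul]
  simp only [mul_assoc, Algebra.left_comm]

lemma apply_base (hG : IsCayEndExtending c σ₁ σ₂ σ₃ σ₄ g G)
    (hinr : ∀ v, G (0, v) = (0, h v * algebraMap R A b)) :
    g c = c * algebraMap R A (b ^ 2) := by
  simpa using hG.apply_mul_mul hinr 1 1

lemma eq_apply_of_apply_base_mul (hG : IsCayEndExtending c σ₁ σ₂ σ₃ σ₄ g G)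
    (hinr : ∀ v, G (0, v) = (0, h v * algebraMap R A b)) (hc : IsLeftRegular c) {x y : A}
    (hxy : g (c * x) = c * y * algebraMap R A (b ^ 2)) : y = g x := by
  rw [mul_assoc, ← Algebra.commutes, ← mul_assoc, ← hG.apply_base hinr, ← g.apply_symm_apply y,
    ← map_mul, g.injective.eq_iff] at hxy
  rw [hc hxy, g.apply_symm_apply]

lemma twist₁_apply (hG : IsCayEndExtending c σ₁ σ₂ σ₃ σ₄ g G)
    (hinr : ∀ v, G (0, v) = (0, h v * algebraMap R A b)) (hc : IsLeftRegular c) (x : A) :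
    σ₁ (h x) = g (σ₁ x) :=
  hG.eq_apply_of_apply_base_mul hinr hc <| by simpa using hG.apply_mul_mul hinr x 1

lemma twist₂_apply (hG : IsCayEndExtending c σ₁ σ₂ σ₃ σ₄ g G)
    (hinr : ∀ v, G (0, v) = (0, h v * algebraMap R A b)) (hc : IsLeftRegular c) (x : A) :
    σ₂ (h x) = g (σ₂ x) :=
  hG.eq_apply_of_apply_base_mul hinr hc <| by simpa using hG.apply_mul_mul hinr 1 x

end Scalar

end IsCayEndExtending

section Central

variable {R A : Type*} [CommSemiring R] [Semiring A] [Algebra R A] [Algebra.IsCentral R A]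

lemma exists_algebraMap_eq_of_mem_center {x : A} (hx : x ∈ Set.center A) :
    ∃ r : R, algebraMap R A r = x :=
  Algebra.mem_bot.1 (Algebra.IsCentral.out (K := R) hx)

lemma isUnit_of_isUnit_algebraMap_of_isCentral [FaithfulSMul R A] {r : R}
    (hr : IsUnit (algebraMap R A r)) : IsUnit r := by
  obtain ⟨u, hu⟩ := hr
  have hcenter : (u : A) ∈ Set.center A := hu ▸ (Subalgebra.center R A).algebraMap_mem r
  obtain ⟨s, hs⟩ := exists_algebraMap_eq_of_mem_center (R := R) (Set.units_inv_mem_center hcenter)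
  refine .of_mul_eq_one s (FaithfulSMul.algebraMap_injective R A ?_)
  rw [map_mul, map_one, ← hu, hs, u.mul_inv]

end Central

lemma IsCayEndExtending.exists_isUnit_map_inr {R A : Type*} [CommSemiring R] [Ring A]
    [Algebra R A] [FaithfulSMul R A] [Algebra.IsCentral R A] (h2 : IsLeftRegular (2 : R)) {c : A}
    {σ₁ σ₂ : A → A} {σ₃ g : A ≃+* A} {G : A × A → A × A}
    (h : IsCayEndExtending c σ₁ σ₂ σ₃ σ₃ g G) (hσ₁ : σ₁ 0 = 0) (hσ₂ : σ₂ 0 = 0)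
    (hG : Function.Surjective G) :
    ∃ b : R, IsUnit b ∧ ∀ v, G (0, v) = (0, σ₃ (g (σ₃.symm v)) * algebraMap R A b) := by
  have snd_center := h.snd_mem_center hσ₁ hσ₂ σ₃.surjective g.surjective
  have snd_unit := h.isUnit_snd hσ₁ hσ₂ σ₃.surjective σ₃.surjective hG
  have two_mul_fst := h.two_mul_fst_eq_zero snd_center snd_unit
  obtain ⟨a, ha⟩ := exists_algebraMap_eq_of_mem_center (R := R)
    (h.fst_mem_center hσ₁ hσ₂ g.surjective)
  obtain ⟨b, hb⟩ := exists_algebraMap_eq_of_mem_center (R := R) snd_center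
  have a_eq_zero : a = 0 := by
    rwa [← ha, ← map_ofNat (algebraMap R A), ← map_mul, FaithfulSMul.algebraMap_eq_zero_iff,
      h2.mul_left_eq_zero_iff] at two_mul_fst
  refine ⟨b, isUnit_of_isUnit_algebraMap_of_isCentral (hb ▸ snd_unit), fun v ↦ ?_⟩
  have map_inr := h.map_inr_left hσ₁ (σ₃.symm v)
  rwa [σ₃.apply_symm_apply, ← ha, ← hb, a_eq_zero, map_zero, mul_zero] at map_inr

theorem cay_central_division_algebra_automorphism_form_general
    {R A : Type*} [CommSemiring R] [Ring A] [Algebra R A] [FaithfulSMul R A] [Algebra.IsCentral R A]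
    (h2 : IsLeftRegular (2 : R)) (σ₁ σ₂ : A →ₐ[R] A) (σ₃ : A ≃+* A) (c : A)
    (hc : IsLeftRegular c) (G : A × A → A × A) (hGsurj : Function.Surjective G)
    (hGadd : ∀ p q : A × A, G (p + q) = G p + G q)
    (hGmul : ∀ p q : A × A,
      G (cayMul c σ₁ σ₂ σ₃ σ₃ p q) = cayMul c σ₁ σ₂ σ₃ σ₃ (G p) (G q))
    (g : A ≃+* A) (hGg : ∀ x : A, G (x, 0) = (g x, 0)) :
    ∃ b : R, IsUnit b ∧ g c = c * algebraMap R A (b ^ 2) ∧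
      (∀ x : A, σ₁ (σ₃ (g (σ₃.symm x))) = g (σ₁ x)) ∧
      (∀ x : A, σ₂ (σ₃ (g (σ₃.symm x))) = g (σ₂ x)) ∧
      (∀ u v : A, G (u, v) = (g u, σ₃ (g (σ₃.symm v)) * algebraMap R A b)) := by
  have hG : IsCayEndExtending c σ₁ σ₂ σ₃ σ₃ g G := ⟨hGadd, hGmul, hGg⟩
  let h : A ≃+* A := (σ₃.symm.trans g).trans σ₃
  obtain ⟨b, hb, hinr⟩ : ∃ b : R, IsUnit b ∧ ∀ v, G (0, v) = (0, h v * algebraMap R A b) :=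
    hG.exists_isUnit_map_inr h2 (map_zero σ₁) (map_zero σ₂) hGsurj
  refine ⟨b, hb, hG.apply_base hinr, hG.twist₁_apply hinr hc, hG.twist₂_apply hinr hc,
    fun u v ↦ ?_⟩
  rw [hG.map_mk, hinr, Prod.mk_add_mk, add_zero, zero_add]
  rfl

/-- If `char F ≠ 2`, `σ₃ = σ₄`, and `G` is an `F`-algebra automorphism of
`Cay(D,c,σ₁,σ₂,σ₃,σ₄)` restricting to `g ∈ Aut_F(D)` on `D`, then there is `b ∈ F⁎`
with `g(c) = c·b²` and, with `h = σ₃∘g∘σ₃⁻¹`, one has `σ₁∘h = g∘σ₁`, `σ₂∘h = g∘σ₂`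
and `G(u,v) = (g(u), h(v)·b)`. -/
theorem cay_central_division_algebra_automorphism_form
    {F D : Type*} [Field F] [DivisionRing D] [Algebra F D]
    [FiniteDimensional F D] [Algebra.IsCentral F D]
    (hF : (2 : F) ≠ 0)
    (σ₁ σ₂ σ₃ σ₄ : D ≃ₐ[F] D) (c : D) (hc : c ≠ 0) (h34 : σ₃ = σ₄)
    (G : D × D → D × D)
    (hGbij : Function.Bijective G)
    (hGadd : ∀ p q : D × D, G (p + q) = G p + G q)
    (hGsmul : ∀ (α : F) (p : D × D), G (α • p) = α • G p)
    (hGmul : ∀ p q : D × D,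
      G (cayMul c σ₁ σ₂ σ₃ σ₄ p q) = cayMul c σ₁ σ₂ σ₃ σ₄ (G p) (G q))
    (g : D ≃ₐ[F] D) (hGg : ∀ x : D, G (x, 0) = (g x, 0)) :
    ∃ b : F, b ≠ 0 ∧ g c = c * algebraMap F D (b ^ 2) ∧
      (∀ x : D, σ₁ (σ₃ (g (σ₃.symm x))) = g (σ₁ x)) ∧
      (∀ x : D, σ₂ (σ₃ (g (σ₃.symm x))) = g (σ₂ x)) ∧
      (∀ u v : D, G (u, v) = (g u, σ₃ (g (σ₃.symm v)) * algebraMap F D b)) := by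
  subst h34
  obtain ⟨b, hb, h⟩ := cay_central_division_algebra_automorphism_form_general (R := F)
    (IsRegular.of_ne_zero hF).left σ₁ σ₂ σ₃ c (IsRegular.of_ne_zero hc).left G hGbij.surjective
    hGadd hGmul g hGg
  exact ⟨b, hb.ne_zero, h⟩
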